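/- arXiv:1505.01110 — 8 statements merged into one kernel-verified Lean document; each statement's English description precedes it below -/
import Mathlib

section
/- For any two feasible bipartite graphs G₁ and G₂, the fractional cover values multiply under tensor product: LP(G₁ ⊗ G₂) = LP(G₁) · LP(G₂). -/
/-!
The inequality `≤` holds because the product `(y₁, y₂) ↦ α y₁ * β y₂` of two fractional covers is a
fractional cover of the tensor product (`IsCover.mul`).

The inequality `≥` needs no linear programming duality. Let `γ` be a fractional cover of `G₁ ⊗ G₂`.
For fixed `x₁`, the function `y₂ ↦ ∑_{y₁ ~ x₁} γ (y₁, y₂)` is a fractional cover of `G₂`, so its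
total weight is at least `LP(G₂)` (`LP_le_sum_fiber`). Hence the marginal `y₁ ↦ ∑_{y₂} γ (y₁, y₂)`,
divided by `LP(G₂)`, is a fractional cover of `G₁`, and its total weight is at least `LP(G₁)`; if
`LP(G₂) = 0`, the inequality is trivial.
-/

open scoped BigOperators
open Classical

/-- `LP X Y r` is the value of the fractional cover linear program of the bipartite
graph with left part `X`, right part `Y` and adjacency relation `r`: the infimum of
`∑ y, α y` over all `α : Y → ℝ` with `α y ≥ 0` and `∑_{y ~ x} α y ≥ 1` for every `x`. -/
noncomputable def LP (X Y : Type*) [Fintype X] [Fintype Y] (r : X → Y → Prop) : ℝ :=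
  sInf {c : ℝ | ∃ α : Y → ℝ, (∀ y, 0 ≤ α y) ∧
    (∀ x : X, 1 ≤ ∑ y : Y, if r x y then α y else 0) ∧ c = ∑ y : Y, α y}

/-- The tensor product adjacency relation: `(x₁,x₂) ~ (y₁,y₂)` iff `x₁ ~ y₁` and `x₂ ~ y₂`. -/
def tensorRel {X₁ Y₁ X₂ Y₂ : Type*} (r₁ : X₁ → Y₁ → Prop) (r₂ : X₂ → Y₂ → Prop) :
    X₁ × X₂ → Y₁ × Y₂ → Prop :=
  fun x y => r₁ x.1 y.1 ∧ r₂ x.2 y.2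

/-- `α` is a fractional cover of the bipartite graph `r`, that is, a feasible point of the linear
program defining `LP`. -/
def IsCover {X Y : Type*} [Fintype Y] (r : X → Y → Prop) (α : Y → ℝ) : Prop :=
  (∀ y, 0 ≤ α y) ∧ ∀ x : X, 1 ≤ ∑ y : Y, if r x y then α y else 0

section LPBasics

variable {X Y : Type*} [Fintype Y] {r : X → Y → Prop}

lemma LP_le_of_isCover [Fintype X] {α : Y → ℝ} (h : IsCover r α) : LP X Y r ≤ ∑ y, α y := by
  refine csInf_le ⟨0, ?_⟩ ⟨α, h.1, h.2, rfl⟩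
  rintro c ⟨β, hβ, -, rfl⟩
  exact Finset.sum_nonneg fun y _ => hβ y

lemma LP_nonneg [Fintype X] : 0 ≤ LP X Y r := by
  refine Real.sInf_nonneg ?_
  rintro c ⟨β, hβ, -, rfl⟩
  exact Finset.sum_nonneg fun y _ => hβ y

/-- Feasibility makes the constant function `1` a fractional cover. -/
lemma isCover_one (h : ∀ x, ∃ y, r x y) : IsCover r (fun _ => 1) := by
  refine ⟨fun _ => zero_le_one, fun x => ?_⟩
  obtain ⟨y, hy⟩ := h x
  calc (1 : ℝ) = if r x y then 1 else 0 := by rw [if_pos hy]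
    _ ≤ _ := Finset.single_le_sum (f := fun y => if r x y then (1 : ℝ) else 0)
      (fun z _ => by split_ifs <;> norm_num) (Finset.mem_univ y)

lemma le_LP [Fintype X] (h : ∀ x, ∃ y, r x y) {t : ℝ} (ht : ∀ α, IsCover r α → t ≤ ∑ y, α y) :
    t ≤ LP X Y r := by
  refine le_csInf ⟨_, fun _ => 1, (isCover_one h).1, (isCover_one h).2, rfl⟩ ?_
  rintro c ⟨α, h0, h1, rfl⟩
  exact ht α ⟨h0, h1⟩

lemma le_LP_mul [Fintype X] (h : ∀ x, ∃ y, r x y) {t k : ℝ} (hk : 0 ≤ k)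
    (ht : ∀ α, IsCover r α → t ≤ (∑ y, α y) * k) : t ≤ LP X Y r * k := by
  rcases hk.eq_or_lt with rfl | hk
  · simpa using ht _ (isCover_one h)
  · rw [← div_le_iff₀ hk]
    exact le_LP h fun α hα => (div_le_iff₀ hk).2 (ht α hα)

end LPBasics

section Tensor

variable {X₁ Y₁ X₂ Y₂ : Type*} [Fintype Y₁] [Fintype Y₂]
  {r₁ : X₁ → Y₁ → Prop} {r₂ : X₂ → Y₂ → Prop}

lemma IsCover.mul {α : Y₁ → ℝ} {β : Y₂ → ℝ} (hα : IsCover r₁ α) (hβ : IsCover r₂ β) :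
    IsCover (tensorRel r₁ r₂) (fun y => α y.1 * β y.2) := by
  refine ⟨fun y => mul_nonneg (hα.1 _) (hβ.1 _), fun x => ?_⟩
  calc (1 : ℝ) ≤ (∑ y, if r₁ x.1 y then α y else 0) * ∑ y, if r₂ x.2 y then β y else 0 :=
        one_le_mul_of_one_le_of_one_le (hα.2 _) (hβ.2 _)
    _ = _ := by
        rw [Finset.sum_mul_sum, ← Fintype.sum_prod_type']
        refine Finset.sum_congr rfl fun y _ => ?_
        by_cases h1 : r₁ x.1 y.1 <;> by_cases h2 : r₂ x.2 y.2 <;> simp [tensorRel, h1, h2]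

/-- The part of a cover of `G₁ ⊗ G₂` lying over the neighbours of a fixed `x₁` projects to a cover
of `G₂`, so it has weight at least `LP(G₂)`. -/
lemma LP_le_sum_fiber [Fintype X₂] {γ : Y₁ × Y₂ → ℝ} (hγ : IsCover (tensorRel r₁ r₂) γ) (x₁ : X₁) :
    LP X₂ Y₂ r₂ ≤ ∑ y₁, if r₁ x₁ y₁ then ∑ y₂, γ (y₁, y₂) else 0 := by
  have hcov : IsCover r₂ (fun y₂ => ∑ y₁, if r₁ x₁ y₁ then γ (y₁, y₂) else 0) := by
    refine ⟨fun y₂ => Finset.sum_nonneg fun y₁ _ => ?_, fun x₂ => ?_⟩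
    · split_ifs
      exacts [hγ.1 _, le_rfl]
    · refine (hγ.2 (x₁, x₂)).trans_eq ?_
      rw [Fintype.sum_prod_type_right]
      refine Finset.sum_congr rfl fun y₂ _ => ?_
      by_cases h2 : r₂ x₂ y₂ <;> simp [tensorRel, h2]
  refine (LP_le_of_isCover hcov).trans_eq ?_
  rw [Finset.sum_comm]
  refine Finset.sum_congr rfl fun y₁ _ => ?_
  split_ifs <;> simp

lemma LP_mul_LP_le_sum [Fintype X₁] [Fintype X₂] {γ : Y₁ × Y₂ → ℝ} (hγ : IsCover (tensorRel r₁ r₂) γ) :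
    LP X₁ Y₁ r₁ * LP X₂ Y₂ r₂ ≤ ∑ y, γ y := by
  rcases (LP_nonneg (r := r₂)).eq_or_lt with h0 | hpos
  · rw [← h0, mul_zero]
    exact Finset.sum_nonneg fun y _ => hγ.1 y
  · have hcov : IsCover r₁ (fun y₁ => (∑ y₂, γ (y₁, y₂)) / LP X₂ Y₂ r₂) := by
      refine ⟨fun y₁ => div_nonneg (Finset.sum_nonneg fun y₂ _ => hγ.1 _) hpos.le, fun x₁ => ?_⟩
      refine ((one_le_div hpos).2 (LP_le_sum_fiber hγ x₁)).trans_eq ?_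
      rw [Finset.sum_div]
      refine Finset.sum_congr rfl fun y₁ _ => ?_
      split_ifs <;> simp
    have h := LP_le_of_isCover hcov
    rwa [← Finset.sum_div, le_div_iff₀ hpos, ← Fintype.sum_prod_type] at h

end Tensor

/-- For any two feasible bipartite graphs, the fractional cover values multiply under
tensor product: `LP(G₁ ⊗ G₂) = LP(G₁) · LP(G₂)`. -/
theorem LP_tensor_eq_mul {X₁ Y₁ X₂ Y₂ : Type*}
    [Fintype X₁] [Fintype Y₁] [Fintype X₂] [Fintype Y₂]
    (r₁ : X₁ → Y₁ → Prop) (r₂ : X₂ → Y₂ → Prop)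
    (h₁ : ∀ x : X₁, ∃ y : Y₁, r₁ x y) (h₂ : ∀ x : X₂, ∃ y : Y₂, r₂ x y) :
    LP (X₁ × X₂) (Y₁ × Y₂) (tensorRel r₁ r₂) = LP X₁ Y₁ r₁ * LP X₂ Y₂ r₂ := by
  apply le_antisymm
  · refine le_LP_mul h₁ LP_nonneg fun α hα => ?_
    rw [mul_comm]
    refine le_LP_mul h₂ (Finset.sum_nonneg fun y _ => hα.1 y) fun β hβ => ?_
    rw [mul_comm, Finset.sum_mul_sum, ← Fintype.sum_prod_type']
    exact LP_le_of_isCover (hα.mul hβ)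
  · refine le_LP (fun x => ?_) fun γ hγ => LP_mul_LP_le_sum hγ
    obtain ⟨y₁, hy₁⟩ := h₁ x.1
    obtain ⟨y₂, hy₂⟩ := h₂ x.2
    exact ⟨(y₁, y₂), hy₁, hy₂⟩
end

section
/- Let G = (X, Y) be a feasible bipartite graph. Then the minimum, over all channels p (i.e., families of reals p(y|x) ≥ 0 with Σ_{y∈Y} p(y|x) = 1 for every x ∈ X and p(y|x) = 0 whenever x is not adjacent to y), of the quantity Σ_{y∈Y} max_{x∈X} p(y|x), equals LP(G). -/
/-!
Channels and fractional covers dominate each other. If `p` is a channel supported on the graph,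
then `α y = max_x p(y|x)` is a fractional cover of the same value, so `LP` is a lower bound
(`LP_le_sum_iSup`). Conversely, a fractional cover `α` yields the channel obtained by normalizing
the restriction of `α` to the neighborhood of each `x`; the normalizing constant is at least `1`,
so `max_x p(y|x) ≤ α y` (`exists_channel_le`). Applied to an optimal cover, this gives a channel
of value at most `LP`. An optimal cover exists (`exists_optimal_cover`) because truncating a cover
at `1` keeps it a cover, so the program may be restricted to a compact subset of the unit cube.
-/

open scoped BigOperators
open Classical

/-- A channel supported on the bipartite graph: `p y x ≥ 0`, each row sums to one,
and `p(y|x) = 0` whenever `x` is not adjacent to `y`. -/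
def IsChannelOn {X Y : Type*} [Fintype Y] (r : X → Y → Prop) (p : X → Y → ℝ) : Prop :=
  (∀ x y, 0 ≤ p x y) ∧ (∀ x, ∑ y : Y, p x y = 1) ∧ (∀ x y, ¬ r x y → p x y = 0)

/-- `α` is a fractional cover: a feasible point of the linear program defining `LP`. -/
def IsFracCover {X Y : Type*} [Fintype Y] (r : X → Y → Prop) (α : Y → ℝ) : Prop :=
  (∀ y, 0 ≤ α y) ∧ ∀ x : X, 1 ≤ ∑ y : Y, if r x y then α y else 0

lemma LP_le_of_isFracCover {X Y : Type*} [Fintype X] [Fintype Y] {r : X → Y → Prop}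
    {α : Y → ℝ} (h : IsFracCover r α) : LP X Y r ≤ ∑ y, α y := by
  refine csInf_le ⟨0, ?_⟩ ⟨α, h.1, h.2, rfl⟩
  rintro c ⟨β, hβ, -, rfl⟩
  exact Finset.sum_nonneg fun y _ => hβ y

lemma IsFracCover.min_one {X Y : Type*} [Fintype Y] {r : X → Y → Prop} {α : Y → ℝ}
    (h : IsFracCover r α) : IsFracCover r fun y => min (α y) 1 := by
  refine ⟨fun y => le_min (h.1 y) zero_le_one, fun x => ?_⟩
  have hnn : ∀ y ∈ Finset.univ, 0 ≤ if r x y then min (α y) 1 else 0 := fun y _ => by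
    split_ifs
    exacts [le_min (h.1 y) zero_le_one, le_rfl]
  -- Either some neighbor of `x` is truncated, and covers `x` alone, or none is.
  by_cases hx : ∃ y, r x y ∧ 1 ≤ α y
  · obtain ⟨y, hy, h1⟩ := hx
    have := Finset.single_le_sum hnn (Finset.mem_univ y)
    simpa [hy, h1] using this
  · push Not at hx
    refine (h.2 x).trans_eq (Finset.sum_congr rfl fun y _ => ?_)
    split_ifs with hy
    · exact (min_eq_left (hx y hy).le).symm
    · rfl

lemma exists_optimal_cover {X Y : Type*} [Fintype X] [Fintype Y] {r : X → Y → Prop}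
    (hfeas : ∀ x : X, ∃ y : Y, r x y) :
    ∃ α : Y → ℝ, IsFracCover r α ∧ ∑ y, α y = LP X Y r := by
  have hone : IsFracCover r fun _ => (1 : ℝ) := by
    refine ⟨fun _ => zero_le_one, fun x => ?_⟩
    obtain ⟨y, hy⟩ := hfeas x
    have := Finset.single_le_sum (f := fun y => if r x y then (1 : ℝ) else 0)
      (fun z _ => by split_ifs <;> norm_num) (Finset.mem_univ y)
    simpa [hy] using this
  have hclosed : IsClosed {α : Y → ℝ | ∀ x : X, 1 ≤ ∑ y : Y, if r x y then α y else 0} := by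
    rw [Set.ofPred_forall]
    refine isClosed_iInter fun x => isClosed_le continuous_const ?_
    refine continuous_finsetSum _ fun y _ => ?_
    split_ifs <;> fun_prop
  obtain ⟨α, ⟨hα, hcov⟩, hmin⟩ :=
    ((isCompact_Icc (a := (0 : Y → ℝ)) (b := 1)).inter_right hclosed).exists_isMinOn
      ⟨1, ⟨zero_le_one, le_rfl⟩, hone.2⟩
      (f := fun α : Y → ℝ => ∑ y, α y) (by fun_prop)
  have hc : IsFracCover r α := ⟨hα.1, hcov⟩
  refine ⟨α, hc, le_antisymm (le_csInf ⟨_, α, hc.1, hc.2, rfl⟩ ?_) (LP_le_of_isFracCover hc)⟩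
  rintro c ⟨β, hβ, hβc, rfl⟩
  have hm := IsFracCover.min_one (r := r) ⟨hβ, hβc⟩
  exact (hmin ⟨⟨hm.1, fun y => min_le_right _ _⟩, hm.2⟩).trans
    (Finset.sum_le_sum fun y _ => min_le_left _ _)

/-- The columnwise maxima of a channel form a fractional cover. -/
lemma LP_le_sum_iSup {X Y : Type*} [Fintype X] [Fintype Y] {r : X → Y → Prop}
    {p : X → Y → ℝ} (hp : IsChannelOn r p) : LP X Y r ≤ ∑ y : Y, ⨆ x : X, p x y := by
  obtain ⟨h0, h1, hr⟩ := hp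
  refine LP_le_of_isFracCover ⟨fun y => Real.iSup_nonneg fun x => h0 x y, fun x => ?_⟩
  rw [← h1 x]
  refine Finset.sum_le_sum fun y _ => ?_
  split_ifs with hy
  · exact le_ciSup (f := fun x => p x y) (Set.finite_range _).bddAbove x
  · exact (hr x y hy).le

lemma exists_channel_le {X Y : Type*} [Fintype Y] {r : X → Y → Prop}
    {α : Y → ℝ} (h : IsFracCover r α) :
    ∃ p : X → Y → ℝ, IsChannelOn r p ∧ ∀ x y, p x y ≤ α y := by
  refine ⟨fun x y => (if r x y then α y else 0) / ∑ z, if r x z then α z else 0,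
    ⟨fun x y => ?_, fun x => ?_, fun x y hxy => by simp [hxy]⟩, fun x y => ?_⟩
  · refine div_nonneg ?_ (zero_le_one.trans (h.2 x))
    split_ifs
    exacts [h.1 y, le_rfl]
  · rw [← Finset.sum_div]
    exact div_self (zero_lt_one.trans_le (h.2 x)).ne'
  · dsimp only
    split_ifs
    · exact div_le_self (h.1 y) (h.2 x)
    · simpa using h.1 y

/-- For a feasible bipartite graph `G`, the minimum over all channels `p` supported on
`G` of `∑_y max_x p(y|x)` is attained and equals `LP(G)`. -/
theorem isLeast_sum_max_channel_eq_LP {X Y : Type*}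
    [Fintype X] [Fintype Y] [Nonempty X]
    (r : X → Y → Prop) (hfeas : ∀ x : X, ∃ y : Y, r x y) :
    IsLeast {c : ℝ | ∃ p : X → Y → ℝ, IsChannelOn r p ∧
        c = ∑ y : Y, ⨆ x : X, p x y}
      (LP X Y r) := by
  constructor
  · obtain ⟨α, hα, hopt⟩ := exists_optimal_cover hfeas
    obtain ⟨p, hp, hle⟩ := exists_channel_le hα
    refine ⟨p, hp, le_antisymm (LP_le_sum_iSup hp) ?_⟩
    rw [← hopt]
    exact Finset.sum_le_sum fun y _ => ciSup_le fun x => hle x y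
  · rintro c ⟨p, hp, rfl⟩
    exact LP_le_sum_iSup hp
end

section
/- Let G = (X, Y) be a feasible bipartite graph with X nonempty. Then the minimum, over all probability mass functions q on X (q(x) ≥ 0, Σ_{x∈X} q(x) = 1), of max_{y∈Y} Σ_{x : x ~ y} q(x), equals 1 / LP(G). -/
/-!
The quantity `∑ y, β y * ∑_{x ~ y} q x` is the payoff of a zero-sum matrix game on the product of the
simplices over `X` and `Y`. By the Sion-von Neumann minimax theorem it has a saddle point
`(q, β)`, with value `v` say (`exists_game_solution`): `∑_{x ~ y} q x ≤ v` for every `y`, and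
`v ≤ ∑_{y ~ x} β y` for every `x`. Feasibility forces `v > 0`. Then `β / v` is a fractional cover of
weight `1 / v`, while pairing any fractional cover with `q` shows its weight is at least `1 / v`
(`LP_eq_inv`); and pairing any probability mass function with `β` shows that its maximal
neighbourhood weight is at least `v`, with equality for `q`.
-/

open scoped BigOperators
open Classical

/-- The payoff of the game may be summed in either order. -/
lemma sum_mul_sum_ite_comm {X Y : Type*} [Fintype X] [Fintype Y] (r : X → Y → Prop)
    (q : X → ℝ) (β : Y → ℝ) :
    ∑ y, β y * (∑ x, if r x y then q x else 0) = ∑ x, q x * (∑ y, if r x y then β y else 0) := by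
  simp only [Finset.mul_sum]
  rw [Finset.sum_comm]
  refine Finset.sum_congr rfl fun x _ => Finset.sum_congr rfl fun y _ => ?_
  split_ifs <;> ring

/-- Optimal strategies and the value of the zero-sum game with payoff matrix the biadjacency
matrix of `r`. -/
lemma exists_game_solution {X Y : Type*} [Fintype X] [Fintype Y] [Nonempty X] [Nonempty Y]
    (r : X → Y → Prop) :
    ∃ (q : X → ℝ) (β : Y → ℝ) (v : ℝ), q ∈ stdSimplex ℝ X ∧ β ∈ stdSimplex ℝ Y ∧
      (∀ y, (∑ x, if r x y then q x else 0) ≤ v) ∧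
      (∀ x, v ≤ ∑ y, if r x y then β y else 0) := by
  let f : (X → ℝ) → (Y → ℝ) → ℝ := fun q β => ∑ y, β y * (∑ x, if r x y then q x else 0)
  -- As a function of either strategy, the payoff is a linear form.
  have hL : ∀ β : Y → ℝ, ∃ L : (X → ℝ) →ₗ[ℝ] ℝ, ∀ q, f q β = L q := fun β =>
    ⟨∑ x, (∑ y, if r x y then β y else 0) • LinearMap.proj x, fun q => by
      simp only [f]
      rw [sum_mul_sum_ite_comm]
      simp only [LinearMap.sum_apply, LinearMap.smul_apply,
        LinearMap.proj_apply, smul_eq_mul, mul_comm]⟩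
  have hM : ∀ q : X → ℝ, ∃ M : (Y → ℝ) →ₗ[ℝ] ℝ, ∀ β, f q β = M β := fun q =>
    ⟨∑ y, (∑ x, if r x y then q x else 0) • LinearMap.proj y, fun β => by
      simp only [f, LinearMap.sum_apply, LinearMap.smul_apply,
        LinearMap.proj_apply, smul_eq_mul, mul_comm]⟩
  obtain ⟨q, hq, β, hβ, hs⟩ := Sion.exists_isSaddlePointOn (f := f)
    (X := stdSimplex ℝ X) (Y := stdSimplex ℝ Y)
    ⟨_, single_mem_stdSimplex ℝ (Classical.arbitrary X)⟩ (convex_stdSimplex ℝ X)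
    (isCompact_stdSimplex ℝ X)
    (fun β _ => by
      obtain ⟨L, h⟩ := hL β
      simp only [h]
      exact L.continuous_of_finiteDimensional.continuousOn.lowerSemicontinuousOn)
    (fun β _ => by
      obtain ⟨L, h⟩ := hL β
      simp only [h]
      exact (L.convexOn (convex_stdSimplex ℝ X)).quasiconvexOn)
    (convex_stdSimplex ℝ Y) ⟨_, single_mem_stdSimplex ℝ (Classical.arbitrary Y)⟩
    (isCompact_stdSimplex ℝ Y)
    (fun q _ => by
      obtain ⟨M, h⟩ := hM q
      simp only [h]
      exact M.continuous_of_finiteDimensional.continuousOn.upperSemicontinuousOn)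
    (fun q _ => by
      obtain ⟨M, h⟩ := hM q
      simp only [h]
      exact (M.concaveOn (convex_stdSimplex ℝ Y)).quasiconcaveOn)
  refine ⟨q, β, f q β, hq, hβ, fun y => ?_, fun x => ?_⟩
  · have h := hs q hq _ (single_mem_stdSimplex ℝ y)
    simpa [f, Pi.single_apply] using h
  · have h := hs _ (single_mem_stdSimplex ℝ x) β hβ
    simpa [f, sum_mul_sum_ite_comm r (Pi.single x 1), Pi.single_apply] using h

/-- Strong duality for the fractional cover program, given optimal strategies `q`, `β` for the
associated game of positive value `v`. -/
lemma LP_eq_inv {X Y : Type*} [Fintype X] [Fintype Y] (r : X → Y → Prop)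
    {q : X → ℝ} {β : Y → ℝ} {v : ℝ} (hv : 0 < v)
    (hq : q ∈ stdSimplex ℝ X) (hβ : β ∈ stdSimplex ℝ Y)
    (hqv : ∀ y, (∑ x, if r x y then q x else 0) ≤ v)
    (hβv : ∀ x, v ≤ ∑ y, if r x y then β y else 0) :
    LP X Y r = 1 / v := by
  refine IsLeast.csInf_eq ⟨⟨fun y => β y / v, fun y => div_nonneg (hβ.1 y) hv.le, fun x => ?_, ?_⟩,
    ?_⟩
  · have h : (∑ y, if r x y then β y / v else 0) = (∑ y, if r x y then β y else 0) / v := by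
      rw [Finset.sum_div]
      exact Finset.sum_congr rfl fun y _ => by split_ifs <;> simp
    rw [h, le_div_iff₀ hv, one_mul]
    exact hβv x
  · rw [← Finset.sum_div, hβ.2]
  · rintro c ⟨α, hα, hcov, rfl⟩
    rw [div_le_iff₀ hv]
    calc (1 : ℝ) = ∑ x, q x * 1 := by simp [hq.2]
      _ ≤ ∑ x, q x * (∑ y, if r x y then α y else 0) :=
        Finset.sum_le_sum fun x _ => mul_le_mul_of_nonneg_left (hcov x) (hq.1 x)
      _ = ∑ y, α y * (∑ x, if r x y then q x else 0) := (sum_mul_sum_ite_comm r q α).symm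
      _ ≤ ∑ y, α y * v :=
        Finset.sum_le_sum fun y _ => mul_le_mul_of_nonneg_left (hqv y) (hα y)
      _ = (∑ y, α y) * v := by rw [Finset.sum_mul]

/-- Weak duality: a strategy `β` guaranteeing `v` bounds below the maximal neighbourhood weight of
every probability mass function `p`. -/
lemma le_iSup_neighbour_weight {X Y : Type*} [Fintype X] [Fintype Y] (r : X → Y → Prop)
    {β : Y → ℝ} {v : ℝ} (hβ : β ∈ stdSimplex ℝ Y)
    (hβv : ∀ x, v ≤ ∑ y, if r x y then β y else 0) {p : X → ℝ} (hp : p ∈ stdSimplex ℝ X) :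
    v ≤ ⨆ y : Y, ∑ x : X, if r x y then p x else 0 := by
  calc v = ∑ x, p x * v := by rw [← Finset.sum_mul, hp.2, one_mul]
    _ ≤ ∑ x, p x * (∑ y, if r x y then β y else 0) :=
      Finset.sum_le_sum fun x _ => mul_le_mul_of_nonneg_left (hβv x) (hp.1 x)
    _ = ∑ y, β y * (∑ x, if r x y then p x else 0) := (sum_mul_sum_ite_comm r p β).symm
    _ ≤ ∑ y, β y * (⨆ y : Y, ∑ x : X, if r x y then p x else 0) :=
      Finset.sum_le_sum fun y _ => mul_le_mul_of_nonneg_left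
        (le_ciSup (f := fun y : Y => ∑ x : X, if r x y then p x else 0)
          (Set.finite_range _).bddAbove y) (hβ.1 y)
    _ = _ := by rw [← Finset.sum_mul, hβ.2, one_mul]

/-- For a feasible bipartite graph `G` with nonempty left part, the minimum over all
probability mass functions `q` on `X` of `max_y ∑_{x ~ y} q(x)` is attained and equals
`1 / LP(G)`. -/
theorem isLeast_min_max_pmf_eq_inv_LP {X Y : Type*}
    [Fintype X] [Fintype Y] [Nonempty X] [Nonempty Y]
    (r : X → Y → Prop) (hfeas : ∀ x : X, ∃ y : Y, r x y) :
    IsLeast {c : ℝ | ∃ q : X → ℝ, (∀ x, 0 ≤ q x) ∧ (∑ x : X, q x = 1) ∧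
        c = ⨆ y : Y, ∑ x : X, if r x y then q x else 0}
      (1 / LP X Y r) := by
  obtain ⟨q, β, v, hq, hβ, hqv, hβv⟩ := exists_game_solution r
  -- A vertex `x` of positive mass makes the weight around any of its neighbours positive.
  have hv : 0 < v := by
    obtain ⟨x, -, hx⟩ : ∃ x ∈ Finset.univ, 0 < q x := by
      apply Finset.exists_lt_of_sum_lt
      simp [hq.2]
    obtain ⟨y, hy⟩ := hfeas x
    have h := Finset.single_le_sum (f := fun x => if r x y then q x else 0)
      (fun i _ => by
        have := hq.1 i
        split_ifs <;> simp [this]) (Finset.mem_univ x)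
    simp only [hy, if_true] at h
    exact hx.trans_le (h.trans (hqv y))
  rw [LP_eq_inv r hv hq hβ hqv hβv, one_div_one_div]
  refine ⟨⟨q, hq.1, hq.2, le_antisymm (le_iSup_neighbour_weight r hβ hβv hq) (ciSup_le hqv)⟩, ?_⟩
  rintro c ⟨p, hp0, hp1, rfl⟩
  exact le_iSup_neighbour_weight r hβ hβv ⟨hp0, hp1⟩
end

section
/- Let X and Y be finite sets, let p(x) be a probability mass function on X with p(x) > 0 for all x, and let p(y|x) be a channel from X to Y (p(y|x) ≥ 0, Σ_y p(y|x) = 1 for every x). Then lim_{α → 0⁺} (α/(α−1)) · log₂ ( Σ_{y∈Y} ( Σ_{x∈X} p(x) p(y|x)^α )^{1/α} ) = − log₂ ( max_{y∈Y} Σ_{x : p(y|x) > 0} p(x) ). That is, the Rényi mutual information of order α converges as α → 0 to I₀(X;Y) = −log₂ max_y Σ_{x : p(y|x)>0} p(x). -/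
/-!
Write `f y α = ∑ x, p x * (W x y) ^ α`, `m y = ∑_{x : W x y > 0} p x`, let `y₀` maximise `m`, and
let `S α` be the argument of the logarithm. The proof squeezes `α * logb 2 (S α)`:

* since `0 ≤ W ≤ 1`, for `α > 0` we have `f y α ≤ m y ≤ m y₀`, hence
  `S α ≤ |Y| * (m y₀) ^ (1 / α)`;
* keeping only the term `y₀` gives `S α ≥ (f y₀ α) ^ (1 / α)`.

Hence `logb 2 (f y₀ α) ≤ α * logb 2 (S α) ≤ α * logb 2 |Y| + logb 2 (m y₀)`. As `α → 0⁺`,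
`f y₀ α → m y₀ > 0` because `t ^ α → 1` for `t > 0`, so both bounds tend to `logb 2 (m y₀)`;
dividing by `α - 1 → -1` gives the limit.
-/

lemma rpow_le_indicator {t α : ℝ} (ht0 : 0 ≤ t) (ht1 : t ≤ 1) (hα : 0 < α) :
    t ^ α ≤ if 0 < t then 1 else 0 := by
  split_ifs with h
  · exact Real.rpow_le_one ht0 ht1 hα.le
  · have : t = 0 := le_antisymm (not_lt.mp h) ht0
    simp [this, Real.zero_rpow hα.ne']

lemma tendsto_rpow_indicator {t : ℝ} (ht0 : 0 ≤ t) :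
    Filter.Tendsto (fun α : ℝ => t ^ α) (nhdsWithin 0 (Set.Ioi 0))
      (nhds (if 0 < t then 1 else 0)) := by
  split_ifs with h
  · have := (Real.continuousAt_const_rpow (b := 0) h.ne').tendsto
    rw [Real.rpow_zero] at this
    exact this.mono_left nhdsWithin_le_nhds
  · have h0 : t = 0 := le_antisymm (not_lt.mp h) ht0
    refine tendsto_const_nhds.congr' ?_
    filter_upwards [self_mem_nhdsWithin] with α hα
    rw [h0, Real.zero_rpow (ne_of_gt hα)]

open scoped BigOperators
open Classical

/-- For a full-support input pmf `p` on a finite set `X` and a channel `W` from `X` to a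
finite set `Y`, the Rényi mutual information of order `α`,
`I_α = (α/(α−1)) log₂ ( Σ_y ( Σ_x p(x) W(y|x)^α )^{1/α} )`
(with real powers, so `0^α = 0` for `α > 0`), converges as `α → 0⁺` to
`I₀ = −log₂ max_y Σ_{x : W(y|x) > 0} p(x)`. -/
theorem renyi_mutual_info_tendsto_zero {X Y : Type*}
    [Fintype X] [Fintype Y] [Nonempty X] [Nonempty Y]
    (p : X → ℝ) (hp : ∀ x, 0 < p x) (hpsum : ∑ x : X, p x = 1)
    (W : X → Y → ℝ) (hW : ∀ x y, 0 ≤ W x y) (hWsum : ∀ x, ∑ y : Y, W x y = 1) :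
    Filter.Tendsto
      (fun α : ℝ => (α / (α - 1)) *
        Real.logb 2 (∑ y : Y, (∑ x : X, p x * (W x y) ^ α) ^ (1 / α)))
      (nhdsWithin 0 (Set.Ioi 0))
      (nhds (- Real.logb 2 (⨆ y : Y, ∑ x : X, if 0 < W x y then p x else 0))) := by
  have hW1 : ∀ x y, W x y ≤ 1 := fun x y => by
    rw [← hWsum x]
    exact Finset.single_le_sum (fun i _ => hW x i) (Finset.mem_univ y)
  set m : Y → ℝ := fun y => ∑ x : X, if 0 < W x y then p x else 0 with hm
  have hm_eq : ∀ y, m y = ∑ x, p x * (if 0 < W x y then 1 else 0) := fun y => by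
    simp only [hm, mul_ite, mul_one, mul_zero]
  obtain ⟨y₀, hy₀⟩ := exists_eq_ciSup_of_finite (f := m)
  have hmax : ∀ y, m y ≤ m y₀ := fun y => by
    rw [hy₀]
    exact le_ciSup (Set.finite_range m).bddAbove y
  rw [← hy₀]
  have hpos : 0 < m y₀ := by
    obtain ⟨x⟩ := ‹Nonempty X›
    obtain ⟨y, -, hy⟩ : ∃ y ∈ Finset.univ, 0 < W x y := by
      refine Finset.exists_lt_of_sum_lt (f := fun _ => (0 : ℝ)) ?_
      simp [hWsum x]
    refine lt_of_lt_of_le ?_ (hmax y)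
    refine Finset.sum_pos' (fun i _ => ?_) ⟨x, Finset.mem_univ x, by simpa [hy] using hp x⟩
    split_ifs
    · exact (hp i).le
    · exact le_rfl
  set f : Y → ℝ → ℝ := fun y α => ∑ x : X, p x * (W x y) ^ α with hf
  have hf0 : ∀ y α, 0 ≤ f y α := fun y α =>
    Finset.sum_nonneg fun x _ => mul_nonneg (hp x).le (Real.rpow_nonneg (hW x y) α)
  have hfle : ∀ y α, 0 < α → f y α ≤ m y₀ := fun y α hα => by
    refine le_trans ?_ (hmax y)
    rw [hm_eq]
    exact Finset.sum_le_sum fun x _ =>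
      mul_le_mul_of_nonneg_left (rpow_le_indicator (hW x y) (hW1 x y) hα) (hp x).le
  have hlim : Filter.Tendsto (f y₀) (nhdsWithin 0 (Set.Ioi 0)) (nhds (m y₀)) := by
    rw [hm_eq]
    exact tendsto_finsetSum _ fun x _ => (tendsto_rpow_indicator (hW x y₀)).const_mul (p x)
  have hid : Filter.Tendsto (fun α : ℝ => α) (nhdsWithin 0 (Set.Ioi 0)) (nhds 0) :=
    Filter.tendsto_id.mono_left nhdsWithin_le_nhds
  have hsq : Filter.Tendsto (fun α : ℝ => α * Real.logb 2 (∑ y : Y, f y α ^ (1 / α)))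
      (nhdsWithin 0 (Set.Ioi 0)) (nhds (Real.logb 2 (m y₀))) := by
    have hlow : Filter.Tendsto (fun α => Real.logb 2 (f y₀ α)) (nhdsWithin 0 (Set.Ioi 0))
        (nhds (Real.logb 2 (m y₀))) :=
      (Real.continuousAt_logb hpos.ne').tendsto.comp hlim
    have hupp : Filter.Tendsto
        (fun α : ℝ => α * Real.logb 2 (Fintype.card Y) + Real.logb 2 (m y₀))
        (nhdsWithin 0 (Set.Ioi 0)) (nhds (Real.logb 2 (m y₀))) := by
      simpa using (hid.mul_const (Real.logb 2 (Fintype.card Y))).add_const (Real.logb 2 (m y₀))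
    have hev : ∀ᶠ α in nhdsWithin (0 : ℝ) (Set.Ioi 0), 0 < α ∧ 0 < f y₀ α :=
      (Filter.eventually_of_mem self_mem_nhdsWithin fun _ h => h).and
        (hlim.eventually (lt_mem_nhds hpos))
    have hlowS : ∀ α, f y₀ α ^ (1 / α) ≤ ∑ y : Y, f y α ^ (1 / α) := fun α =>
      Finset.single_le_sum (f := fun y => f y α ^ (1 / α))
        (fun y _ => Real.rpow_nonneg (hf0 y α) _) (Finset.mem_univ y₀)
    refine tendsto_of_tendsto_of_tendsto_of_le_of_le' hlow hupp ?_ ?_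
    · filter_upwards [hev] with α ⟨hα, hfα⟩
      have := Real.logb_le_logb_of_le one_lt_two (Real.rpow_pos_of_pos hfα _) (hlowS α)
      rw [Real.logb_rpow_eq_mul_logb_of_pos hfα] at this
      calc Real.logb 2 (f y₀ α) = α * (1 / α * Real.logb 2 (f y₀ α)) := by field_simp
        _ ≤ _ := mul_le_mul_of_nonneg_left this hα.le
    · filter_upwards [hev] with α ⟨hα, hfα⟩
      have hS : ∑ y : Y, f y α ^ (1 / α) ≤ Fintype.card Y * m y₀ ^ (1 / α) := by
        refine (Finset.sum_le_card_nsmul _ _ (m y₀ ^ (1 / α)) fun y _ => ?_).trans_eq ?_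
        · exact Real.rpow_le_rpow (hf0 y α) (hfle y α hα) (by positivity)
        · simp [nsmul_eq_mul]
      have := Real.logb_le_logb_of_le one_lt_two
        ((Real.rpow_pos_of_pos hfα _).trans_le (hlowS α)) hS
      rw [Real.logb_mul (by simp) (Real.rpow_pos_of_pos hpos _).ne',
        Real.logb_rpow_eq_mul_logb_of_pos hpos] at this
      calc _ ≤ α * (Real.logb 2 (Fintype.card Y) + 1 / α * Real.logb 2 (m y₀)) :=
            mul_le_mul_of_nonneg_left this hα.le
        _ = _ := by field_simp
  have hdiv := hsq.div (hid.sub_const 1) (by norm_num)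
  rw [zero_sub, div_neg, div_one] at hdiv
  refine hdiv.congr fun α => ?_
  simp only [Pi.div_apply, hf]
  ring
end

section
/- Let X and Y be finite sets, let p(x) be a probability mass function on X, and let p(y|x) be a channel from X to Y (p(y|x) ≥ 0, Σ_y p(y|x) = 1 for every x). Then lim_{α → ∞} (α/(α−1)) · log₂ ( Σ_{y∈Y} ( Σ_{x∈X} p(x) p(y|x)^α )^{1/α} ) = log₂ ( Σ_{y∈Y} max_{x : p(x) > 0} p(y|x) ). That is, the Rényi mutual information of order α converges as α → ∞ to I_∞(X;Y) = log₂ Σ_y max_{x : p(x)>0} p(y|x). -/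
/-!
For fixed `y`, the inner expression is a weighted `α`-mean of the values `W(y|x)` over the support
of `p`. With `M` the maximum of these values, attained at `x₀`, it is bounded above by `M`
(the weights sum to `1`) and below by `p(x₀)^{1/α} M` (keep only the term `x₀`), so it tends to `M`;
this is `tendsto_weightedMean_iSup`. The outer sum is finite, hence converges to `Σ_y M_y`. This
limit is at least `Σ_y W(y|x) = 1` for any `x` in the support, so `log₂` is continuous there, and the
prefactor `α/(α−1)` tends to `1`.
-/

open scoped BigOperators
open Classical

/-- Weighted power means converge, as the exponent tends to infinity, to the maximum over the
support of the weight. -/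
theorem tendsto_weightedMean_iSup {X : Type*} [Fintype X]
    (p : X → ℝ) (hp : ∀ x, 0 ≤ p x) (hpsum : ∑ x : X, p x = 1)
    [Nonempty {x : X // 0 < p x}] (f : X → ℝ) (hf : ∀ x, 0 ≤ f x) :
    Filter.Tendsto (fun α : ℝ => (∑ x : X, p x * f x ^ α) ^ (1 / α)) Filter.atTop
      (nhds (⨆ x : {x : X // 0 < p x}, f x.1)) := by
  obtain ⟨⟨x₀, hx₀⟩, hM⟩ :=
    exists_eq_ciSup_of_finite (f := fun x : {x : X // 0 < p x} => f x.1)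
  have hle : ∀ x, 0 < p x → f x ≤ f x₀ := fun x hx =>
    (le_ciSup (f := fun x : {x : X // 0 < p x} => f x.1)
      (Set.finite_range _).bddAbove ⟨x, hx⟩).trans hM.ge
  rw [← hM]
  have hinv : Filter.Tendsto (fun α : ℝ => 1 / α) Filter.atTop (nhds 0) :=
    tendsto_const_nhds.div_atTop Filter.tendsto_id
  have hlow : Filter.Tendsto (fun α : ℝ => p x₀ ^ (1 / α) * f x₀) Filter.atTop
      (nhds (f x₀)) := by
    have h := ((tendsto_const_nhds (x := p x₀)).rpow hinv (Or.inl hx₀.ne')).mul_const (f x₀)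
    simpa only [Real.rpow_zero, one_mul] using h
  have hroot : ∀ α : ℝ, 0 < α → (f x₀ ^ α) ^ (1 / α) = f x₀ := fun α hα => by
    rw [one_div, Real.rpow_rpow_inv (hf x₀) hα.ne']
  have hterm : ∀ (α : ℝ) (x : X), 0 ≤ p x * f x ^ α := fun α x =>
    mul_nonneg (hp x) (Real.rpow_nonneg (hf x) α)
  refine tendsto_of_tendsto_of_tendsto_of_le_of_le' hlow tendsto_const_nhds ?_ ?_
  · filter_upwards [Filter.eventually_gt_atTop 0] with α hα
    calc p x₀ ^ (1 / α) * f x₀ = (p x₀ * f x₀ ^ α) ^ (1 / α) := by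
          rw [Real.mul_rpow (hp x₀) (Real.rpow_nonneg (hf x₀) α), hroot α hα]
      _ ≤ _ := Real.rpow_le_rpow (hterm α x₀)
          (Finset.single_le_sum (f := fun x => p x * f x ^ α)
            (fun x _ => hterm α x) (Finset.mem_univ x₀)) (by positivity)
  · filter_upwards [Filter.eventually_gt_atTop 0] with α hα
    have hsum : ∑ x : X, p x * f x ^ α ≤ f x₀ ^ α := by
      calc ∑ x : X, p x * f x ^ α ≤ ∑ x : X, p x * f x₀ ^ α := by
            refine Finset.sum_le_sum fun x _ => ?_
            -- Off the support the bound `f x ≤ f x₀` may fail, but both terms vanish.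
            rcases (hp x).eq_or_lt with h | h
            · simp [← h]
            · exact mul_le_mul_of_nonneg_left
                (Real.rpow_le_rpow (hf x) (hle x h) hα.le) h.le
        _ = f x₀ ^ α := by rw [← Finset.sum_mul, hpsum, one_mul]
    calc _ ≤ (f x₀ ^ α) ^ (1 / α) := Real.rpow_le_rpow
          (Finset.sum_nonneg fun x _ => hterm α x) hsum (by positivity)
      _ = f x₀ := hroot α hα

/-- For an input pmf `p` on a finite set `X` and a channel `W` from `X` to a finite set
`Y`, the Rényi mutual information of order `α`,
`I_α = (α/(α−1)) log₂ ( Σ_y ( Σ_x p(x) W(y|x)^α )^{1/α} )`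
(with real powers, so `0^α = 0` for `α > 0`), converges as `α → ∞` to
`I_∞ = log₂ Σ_y max_{x : p(x) > 0} W(y|x)`. -/
theorem renyi_mutual_info_tendsto_top {X Y : Type*}
    [Fintype X] [Fintype Y] [Nonempty X]
    (p : X → ℝ) (hp : ∀ x, 0 ≤ p x) (hpsum : ∑ x : X, p x = 1)
    (W : X → Y → ℝ) (hW : ∀ x y, 0 ≤ W x y) (hWsum : ∀ x, ∑ y : Y, W x y = 1) :
    Filter.Tendsto
      (fun α : ℝ => (α / (α - 1)) *
        Real.logb 2 (∑ y : Y, (∑ x : X, p x * (W x y) ^ α) ^ (1 / α)))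
      Filter.atTop
      (nhds (Real.logb 2 (∑ y : Y, ⨆ x : {x : X // 0 < p x}, W x.1 y))) := by
  obtain ⟨x₁, hx₁⟩ : ∃ x, 0 < p x := by
    by_contra! h
    have := Finset.sum_nonpos fun x (_ : x ∈ Finset.univ) => h x
    linarith
  have : Nonempty {x : X // 0 < p x} := ⟨⟨x₁, hx₁⟩⟩
  have hsum := tendsto_finsetSum Finset.univ fun (y : Y) _ =>
    tendsto_weightedMean_iSup p hp hpsum (fun x => W x y) fun x => hW x y
  have hpos : 1 ≤ ∑ y : Y, ⨆ x : {x : X // 0 < p x}, W x.1 y := by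
    rw [← hWsum x₁]
    exact Finset.sum_le_sum fun y _ =>
      le_ciSup (f := fun x : {x : X // 0 < p x} => W x.1 y)
        (Set.finite_range _).bddAbove ⟨x₁, hx₁⟩
  have hfac : Filter.Tendsto (fun α : ℝ => α / (α - 1)) Filter.atTop (nhds 1) := by
    have hinv : Filter.Tendsto (fun α : ℝ => 1 / (α - 1)) Filter.atTop (nhds 0) :=
      tendsto_const_nhds.div_atTop (Filter.tendsto_atTop_add_const_right _ (-1) Filter.tendsto_id)
    have h := hinv.const_add 1
    rw [add_zero] at h
    refine h.congr' ?_
    filter_upwards [Filter.eventually_gt_atTop 1] with α hα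
    have : α - 1 ≠ 0 := by linarith
    field_simp
    ring
  have hlog := (hsum.log (by linarith)).div_const (Real.log 2)
  simpa only [Real.logb, one_mul] using hfac.mul hlog
end

section
/- Let F be a field, let K₁ : F^{r₁} → F^c, K₃ : F^{s₁} → F^c, K₄ : F^{s₂} → F^c be linear maps, and let V ⊆ F^{r₁} be a subspace with K₁(V) ⊆ range(K₃) + range(K₄). Then for every natural number t, there exist linear maps S : F^{r₁} → F^t, A : F^{r₁} → F^{s₁}, B : F^t → F^{s₂} satisfying K₁v + K₃(A v) + K₄(B (S v)) = 0 for all v ∈ V, if and only if t ≥ f(K₁,K₃,K₄;V). In particular, the minimum such t equals f(K₁,K₃,K₄;V). -/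
/-!
Node two can only act inside the image `U` of `K₄ ∘ B`, so a rate-`t` scheme yields an admissible
subspace `U` of dimension at most `t`. Conversely, an admissible `U` with `dim U ≤ t` is
the image of some map `F^t → U`, which factors through `K₄` and so provides the decoder `B`. Then
`K₁(V)` lies in the range of `(x, y) ↦ K₃ x + K₄ (B y)`, and a linear lift of `-K₁` through this map
on `V`, extended to the whole space, has the action `A` and the encoder `S` as its two components.
Both factorizations are instances of `exists_comp_eq_of_range_le`.
-/

/-- `fMin K₁ K₃ K₄ V` is the minimum of `dim U` over all subspaces `U` of `F^c`
satisfying `K₁(V) ⊆ range(K₃) + U` and `U ⊆ range(K₄)`. -/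
noncomputable def fMin {F : Type*} [Field F] {r₁ s₁ s₂ c : ℕ}
    (K₁ : (Fin r₁ → F) →ₗ[F] (Fin c → F)) (K₃ : (Fin s₁ → F) →ₗ[F] (Fin c → F))
    (K₄ : (Fin s₂ → F) →ₗ[F] (Fin c → F)) (V : Submodule F (Fin r₁ → F)) : ℕ :=
  sInf {d : ℕ | ∃ U : Submodule F (Fin c → F),
    V.map K₁ ≤ LinearMap.range K₃ ⊔ U ∧ U ≤ LinearMap.range K₄ ∧
    Module.finrank F ↥U = d}

/-- Over a field, a linear map whose range lies in that of `f` factors through `f`. -/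
theorem exists_comp_eq_of_range_le {F P M N : Type*} [Field F] [AddCommGroup P] [Module F P]
    [AddCommGroup M] [Module F M] [AddCommGroup N] [Module F N]
    (f : M →ₗ[F] N) (g : P →ₗ[F] N) (h : LinearMap.range g ≤ LinearMap.range f) :
    ∃ k : P →ₗ[F] M, f ∘ₗ k = g := by
  obtain ⟨k, hk⟩ := Module.projective_lifting_property f.rangeRestrict
    (g.codRestrict (LinearMap.range f) fun x => h ⟨x, rfl⟩) f.surjective_rangeRestrict
  refine ⟨k, LinearMap.ext fun x => ?_⟩
  exact congrArg Subtype.val (LinearMap.congr_fun hk x)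

theorem exists_range_eq_of_finrank_le {F N : Type*} [Field F] [AddCommGroup N] [Module F N]
    [FiniteDimensional F N] (U : Submodule F N) {t : ℕ} (h : Module.finrank F U ≤ t) :
    ∃ p : (Fin t → F) →ₗ[F] N, LinearMap.range p = U := by
  obtain ⟨i, hi⟩ := (finrank_le_iff_exists_linearMap (R := F) (M := U)
    (M' := Fin t → F)).1 (by simpa using h)
  -- A left inverse of an embedding `U → F^t` is a surjection onto `U`.
  obtain ⟨q, hq⟩ := i.exists_leftInverse_of_injective (LinearMap.ker_eq_bot.2 hi)
  refine ⟨U.subtype ∘ₗ q, ?_⟩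
  have hs : Function.Surjective q := fun u => ⟨i u, LinearMap.congr_fun hq u⟩
  rw [LinearMap.range_comp, LinearMap.range_eq_top.2 hs, Submodule.map_top, Submodule.range_subtype]

/-- One-shot linear coordination capacity: assuming feasibility
`K₁(V) ⊆ range(K₃) + range(K₄)`, a rate-`t` linear coordination scheme
(linear maps `S, A, B` with `K₁v + K₃(Av) + K₄(B(Sv)) = 0` on `V`) exists
iff `t ≥ fMin K₁ K₃ K₄ V`; in particular the minimum rate equals `fMin K₁ K₃ K₄ V`. -/
theorem linear_coordination_one_shot {F : Type*} [Field F] {r₁ s₁ s₂ c : ℕ}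
    (K₁ : (Fin r₁ → F) →ₗ[F] (Fin c → F)) (K₃ : (Fin s₁ → F) →ₗ[F] (Fin c → F))
    (K₄ : (Fin s₂ → F) →ₗ[F] (Fin c → F)) (V : Submodule F (Fin r₁ → F))
    (hfeas : V.map K₁ ≤ LinearMap.range K₃ ⊔ LinearMap.range K₄) (t : ℕ) :
    (∃ (S : (Fin r₁ → F) →ₗ[F] (Fin t → F)) (A : (Fin r₁ → F) →ₗ[F] (Fin s₁ → F))
        (B : (Fin t → F) →ₗ[F] (Fin s₂ → F)),
        ∀ v ∈ V, K₁ v + K₃ (A v) + K₄ (B (S v)) = 0) ↔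
      fMin K₁ K₃ K₄ V ≤ t := by
  constructor
  · rintro ⟨S, A, B, h⟩
    have hadm : V.map K₁ ≤ LinearMap.range K₃ ⊔ LinearMap.range (K₄ ∘ₗ B) := by
      rintro _ ⟨v, hv, rfl⟩
      have hK : K₁ v = K₃ (-A v) + (K₄ ∘ₗ B) (-S v) := by
        simp only [map_neg, LinearMap.comp_apply]
        linear_combination h v hv
      rw [hK]
      exact Submodule.add_mem_sup ⟨_, rfl⟩ ⟨_, rfl⟩
    have hle : fMin K₁ K₃ K₄ V ≤ Module.finrank F (LinearMap.range (K₄ ∘ₗ B)) :=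
      Nat.sInf_le ⟨_, hadm, LinearMap.range_comp_le_range B K₄, rfl⟩
    exact hle.trans ((LinearMap.finrank_range_le (K₄ ∘ₗ B)).trans_eq (by simp))
  · intro ht
    -- By feasibility `range K₄` is admissible, so the infimum defining `fMin` is attained.
    obtain ⟨U, hU, hU₄, hd⟩ := Nat.sInf_mem
      (s := {d : ℕ | ∃ U : Submodule F (Fin c → F),
        V.map K₁ ≤ LinearMap.range K₃ ⊔ U ∧ U ≤ LinearMap.range K₄ ∧ Module.finrank F ↥U = d})
      ⟨_, LinearMap.range K₄, hfeas, le_rfl, rfl⟩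
    obtain ⟨p, hp⟩ := exists_range_eq_of_finrank_le U (hd.trans_le ht)
    obtain ⟨B, hB⟩ := exists_comp_eq_of_range_le K₄ p (hp.trans_le hU₄)
    obtain ⟨G, hG⟩ := exists_comp_eq_of_range_le (K₃.coprod (K₄ ∘ₗ B)) (-(K₁ ∘ₗ V.subtype)) (by
      rw [LinearMap.range_coprod, hB, hp, LinearMap.range_neg, LinearMap.range_comp,
        Submodule.range_subtype]
      exact hU)
    obtain ⟨E, hE⟩ := G.exists_extend
    refine ⟨LinearMap.snd F _ _ ∘ₗ E, LinearMap.fst F _ _ ∘ₗ E, B, fun v hv => ?_⟩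
    have h₁ : E v = G ⟨v, hv⟩ := LinearMap.congr_fun hE ⟨v, hv⟩
    have h₂ : K₃ (G ⟨v, hv⟩).1 + K₄ (B (G ⟨v, hv⟩).2) = -K₁ v := LinearMap.congr_fun hG ⟨v, hv⟩
    simp only [LinearMap.comp_apply, LinearMap.fst_apply, LinearMap.snd_apply, h₁]
    rw [add_assoc, h₂, add_neg_cancel]
end

section
/- Let F be a field, let K₁ : F^{r₁} → F^c, K₃ : F^{s₁} → F^c, K₄ : F^{s₂} → F^c be linear maps, and let V ⊆ F^{r₁} be a subspace with K₁(V) ⊆ range(K₃) + range(K₄). Consider the two-block linear coordination problem: find linear maps S : F^{r₁} × F^{r₁} → F^t, A : F^{r₁} × F^{r₁} → F^{s₁} × F^{s₁}, B : F^t → F^{s₂} × F^{s₂} such that for all (v₁, v₂) ∈ V × V and i ∈ {1,2}: K₁ v_i + K₃ (A(v₁,v₂))_i + K₄ (B(S(v₁,v₂)))_i = 0. Then the minimum such t equals 2 · f(K₁,K₃,K₄;V); i.e., block coding does not reduce the linear coordination rate. -/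
/-- The image of `K₁(V)` in the quotient of `F^c` by `range K₃`; when
coordination is feasible, its dimension is the optimal rate per letter. -/
def residualSpace {F : Type*} [Field F] {r₁ s₁ c : ℕ}
    (K₁ : (Fin r₁ → F) →ₗ[F] (Fin c → F)) (K₃ : (Fin s₁ → F) →ₗ[F] (Fin c → F))
    (V : Submodule F (Fin r₁ → F)) : Submodule F ((Fin c → F) ⧸ LinearMap.range K₃) :=
  (V.map K₁).map (LinearMap.range K₃).mkQ

/-- A linear map with values in the range of `g` factors linearly through `g`, since `g` has a
linear section over its range. -/
lemma exists_lift_of_range_le {F M N P : Type*} [Field F] [AddCommGroup M] [AddCommGroup N]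
    [AddCommGroup P] [Module F M] [Module F N] [Module F P]
    (g : N →ₗ[F] P) (f : M →ₗ[F] P) (h : ∀ x, f x ∈ LinearMap.range g) :
    ∃ l : M →ₗ[F] N, ∀ x, g (l x) = f x := by
  obtain ⟨σ, hσ⟩ := g.rangeRestrict.exists_rightInverse_of_surjective g.range_rangeRestrict
  refine ⟨σ ∘ₗ f.codRestrict _ h, fun x => ?_⟩
  exact congrArg Subtype.val (LinearMap.congr_fun hσ (f.codRestrict _ h x))

/-- A one-shot scheme of rate `dim (residualSpace K₁ K₃ V)`: send the class of `K₁ v` modulo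
`range K₃`. -/
lemma exists_oneShot {F : Type*} [Field F] {r₁ s₁ s₂ c : ℕ}
    (K₁ : (Fin r₁ → F) →ₗ[F] (Fin c → F)) (K₃ : (Fin s₁ → F) →ₗ[F] (Fin c → F))
    (K₄ : (Fin s₂ → F) →ₗ[F] (Fin c → F)) (V : Submodule F (Fin r₁ → F))
    (hfeas : V.map K₁ ≤ LinearMap.range K₃ ⊔ LinearMap.range K₄) :
    ∃ (S : (Fin r₁ → F) →ₗ[F] residualSpace K₁ K₃ V) (A : (Fin r₁ → F) →ₗ[F] (Fin s₁ → F))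
      (B : residualSpace K₁ K₃ V →ₗ[F] (Fin s₂ → F)),
      ∀ v ∈ V, K₁ v + K₃ (A v) + K₄ (B (S v)) = 0 := by
  set q := (LinearMap.range K₃).mkQ with hq
  obtain ⟨L, hL⟩ := exists_lift_of_range_le (q ∘ₗ K₄) (residualSpace K₁ K₃ V).subtype (by
    rintro ⟨_, _, hx, rfl⟩
    obtain ⟨_, ⟨a, rfl⟩, _, ⟨b, rfl⟩, hab⟩ := Submodule.mem_sup.1 (hfeas hx)
    refine ⟨b, ?_⟩
    simp [q, ← hab])
  have hmem : ∀ v : V, (q ∘ₗ K₁ ∘ₗ V.subtype) v ∈ residualSpace K₁ K₃ V := fun v =>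
    Submodule.mem_map_of_mem (Submodule.mem_map_of_mem v.2)
  obtain ⟨S, hS⟩ := LinearMap.exists_extend ((q ∘ₗ K₁ ∘ₗ V.subtype).codRestrict _ hmem)
  have hS' : ∀ v : V, (S v : (Fin c → F) ⧸ LinearMap.range K₃) = q (K₁ v) := fun v =>
    congrArg Subtype.val (LinearMap.congr_fun hS v)
  obtain ⟨A₀, hA₀⟩ := exists_lift_of_range_le K₃
    ((K₄ ∘ₗ L ∘ₗ S - K₁) ∘ₗ V.subtype) (by
      intro v
      rw [← Submodule.Quotient.mk_eq_zero, ← Submodule.mkQ_apply, ← hq]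
      have h := hL (S v)
      rw [Submodule.subtype_apply, hS'] at h
      simpa [sub_eq_zero] using h)
  obtain ⟨A, hA⟩ := LinearMap.exists_extend A₀
  refine ⟨S, A, -L, fun v hv => ?_⟩
  have h1 : A v = A₀ ⟨v, hv⟩ := LinearMap.congr_fun hA ⟨v, hv⟩
  rw [h1, hA₀]
  simp

lemma fMin_eq_finrank {F : Type*} [Field F] {r₁ s₁ s₂ c : ℕ}
    (K₁ : (Fin r₁ → F) →ₗ[F] (Fin c → F)) (K₃ : (Fin s₁ → F) →ₗ[F] (Fin c → F))
    (K₄ : (Fin s₂ → F) →ₗ[F] (Fin c → F)) (V : Submodule F (Fin r₁ → F))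
    (hfeas : V.map K₁ ≤ LinearMap.range K₃ ⊔ LinearMap.range K₄) :
    fMin K₁ K₃ K₄ V = Module.finrank F (residualSpace K₁ K₃ V) := by
  apply le_antisymm
  · obtain ⟨S, A, B, h⟩ := exists_oneShot K₁ K₃ K₄ V hfeas
    refine le_trans (Nat.sInf_le ⟨LinearMap.range (K₄ ∘ₗ B), ?_, LinearMap.range_comp_le_range _ _,
      rfl⟩) (LinearMap.finrank_range_le _)
    rintro _ ⟨v, hv, rfl⟩
    refine Submodule.mem_sup.2 ⟨K₃ (-A v), ⟨_, rfl⟩, K₄ (B (-S v)), ⟨_, rfl⟩, ?_⟩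
    have := h v hv
    rw [map_neg, map_neg, map_neg, ← sub_eq_zero, ← neg_eq_zero, ← this]
    abel
  · refine le_csInf ⟨_, _, hfeas, le_rfl, rfl⟩ ?_
    rintro _ ⟨U, hU, -, rfl⟩
    have h : residualSpace K₁ K₃ V ≤ U.map (LinearMap.range K₃).mkQ := by
      refine (Submodule.map_mono hU).trans ?_
      simp [Submodule.map_sup]
    exact (Submodule.finrank_mono h).trans (Submodule.finrank_map_le _ _)

/-- Two-block linear coordination: assuming feasibility
`K₁(V) ⊆ range(K₃) + range(K₄)`, the minimum rate `t` for which linear maps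
`S : F^{r₁} × F^{r₁} → F^t`, `A : F^{r₁} × F^{r₁} → F^{s₁} × F^{s₁}`,
`B : F^t → F^{s₂} × F^{s₂}` coordinate both letters equals `2 · fMin K₁ K₃ K₄ V`;
i.e. block coding does not reduce the linear coordination rate. -/
theorem linear_coordination_two_block {F : Type*} [Field F] {r₁ s₁ s₂ c : ℕ}
    (K₁ : (Fin r₁ → F) →ₗ[F] (Fin c → F)) (K₃ : (Fin s₁ → F) →ₗ[F] (Fin c → F))
    (K₄ : (Fin s₂ → F) →ₗ[F] (Fin c → F)) (V : Submodule F (Fin r₁ → F))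
    (hfeas : V.map K₁ ≤ LinearMap.range K₃ ⊔ LinearMap.range K₄) :
    IsLeast {t : ℕ |
        ∃ (S : ((Fin r₁ → F) × (Fin r₁ → F)) →ₗ[F] (Fin t → F))
          (A : ((Fin r₁ → F) × (Fin r₁ → F)) →ₗ[F] ((Fin s₁ → F) × (Fin s₁ → F)))
          (B : (Fin t → F) →ₗ[F] ((Fin s₂ → F) × (Fin s₂ → F))),
          ∀ v₁ ∈ V, ∀ v₂ ∈ V,
            K₁ v₁ + K₃ (A (v₁, v₂)).1 + K₄ (B (S (v₁, v₂))).1 = 0 ∧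
            K₁ v₂ + K₃ (A (v₁, v₂)).2 + K₄ (B (S (v₁, v₂))).2 = 0}
      (2 * fMin K₁ K₃ K₄ V) := by
  rw [fMin_eq_finrank K₁ K₃ K₄ V hfeas]
  constructor
  · obtain ⟨S, A, B, h⟩ := exists_oneShot K₁ K₃ K₄ V hfeas
    let e : (residualSpace K₁ K₃ V × residualSpace K₁ K₃ V) ≃ₗ[F]
        (Fin (2 * Module.finrank F (residualSpace K₁ K₃ V)) → F) :=
      LinearEquiv.ofFinrankEq _ _ (by simp [two_mul])
    refine ⟨e.toLinearMap ∘ₗ S.prodMap S, A.prodMap A, B.prodMap B ∘ₗ e.symm.toLinearMap,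
      fun v₁ h₁ v₂ h₂ => ?_⟩
    simpa using ⟨h v₁ h₁, h v₂ h₂⟩
  · rintro t ⟨S, A, B, h⟩
    set q := (LinearMap.range K₃).mkQ with hq
    have hK₃ : ∀ x, q (K₃ x) = 0 := fun x => by simp [hq]
    obtain ⟨l, hl⟩ := exists_lift_of_range_le ((q ∘ₗ K₄).prodMap (q ∘ₗ K₄) ∘ₗ B)
      ((residualSpace K₁ K₃ V).subtype.prodMap (residualSpace K₁ K₃ V).subtype) (by
        rintro ⟨⟨_, _, ⟨v₁, h₁, rfl⟩, rfl⟩, ⟨_, _, ⟨v₂, h₂, rfl⟩, rfl⟩⟩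
        obtain ⟨e₁, e₂⟩ := h v₁ h₁ v₂ h₂
        have e₁ := congrArg q e₁
        have e₂ := congrArg q e₂
        simp only [map_add, hK₃, add_zero, map_zero] at e₁ e₂
        refine ⟨-S (v₁, v₂), Prod.ext ?_ ?_⟩
        · change q (K₄ (B (-S (v₁, v₂))).1) = q (K₁ v₁)
          simp only [map_neg, Prod.fst_neg]
          exact (eq_neg_of_add_eq_zero_left e₁).symm
        · change q (K₄ (B (-S (v₁, v₂))).2) = q (K₁ v₂)
          simp only [map_neg, Prod.snd_neg]
          exact (eq_neg_of_add_eq_zero_left e₂).symm)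
    -- `l` is injective, since composing it further gives the inclusion of `W × W`.
    have hinj : Function.Injective l := fun x y hxy => by
      have hxy' := (hl x).symm.trans ((congrArg _ hxy).trans (hl y))
      exact Prod.ext (Subtype.ext (congrArg Prod.fst hxy')) (Subtype.ext (congrArg Prod.snd hxy'))
    simpa [two_mul] using LinearMap.finrank_le_finrank_of_injective hinj
end

section
/- Let F be a finite field and K₁ : F^{r₁} → F^c, K₃ : F^{s₁} → F^c, K₄ : F^{s₂} → F^c linear maps with range(K₁) ⊆ range(K₃) + range(K₄) and range(K₄) ⊆ range(K₁), and let d = f(K₁,K₃,K₄;F^{r₁}). In the bipartite graph G with left part F^{r₁}, right part F^{s₂}, and x ~ y iff there exists y₁ ∈ F^{s₁} with K₁x + K₃y₁ + K₄y = 0, there exist |F|^d elements of F^{r₁} whose neighborhoods {y : x ~ y} are pairwise disjoint. -/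
/-- For a finite field `F` and linear maps with `range K₁ ⊆ range K₃ + range K₄` and
`range K₄ ⊆ range K₁`, and `d = fMin K₁ K₃ K₄ ⊤`, there exist `|F|^d` left vertices of
the coordination bipartite graph (`x ~ y` iff `∃ y₁, K₁x + K₃y₁ + K₄y = 0`) whose
neighborhoods are pairwise disjoint. -/
theorem linear_coordination_disjoint_neighborhoods {F : Type*} [Field F] [Fintype F]
    {r₁ s₁ s₂ c : ℕ}
    (K₁ : (Fin r₁ → F) →ₗ[F] (Fin c → F)) (K₃ : (Fin s₁ → F) →ₗ[F] (Fin c → F))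
    (K₄ : (Fin s₂ → F) →ₗ[F] (Fin c → F))
    (h₁ : LinearMap.range K₁ ≤ LinearMap.range K₃ ⊔ LinearMap.range K₄)
    (h₂ : LinearMap.range K₄ ≤ LinearMap.range K₁) :
    ∃ x : Fin (Fintype.card F ^ (fMin K₁ K₃ K₄ ⊤)) → (Fin r₁ → F),
      Function.Injective x ∧
      ∀ i j, i ≠ j → ∀ y : Fin s₂ → F,
        (∃ y₁ : Fin s₁ → F, K₁ (x i) + K₃ y₁ + K₄ y = 0) →
        (∃ y₁ : Fin s₁ → F, K₁ (x j) + K₃ y₁ + K₄ y = 0) → False := by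
  obtain ⟨W', hW'⟩ := exists_isCompl (LinearMap.range K₃ ⊓ LinearMap.range K₄)
  set W := W' ⊓ LinearMap.range K₄ with hW
  have hdisj : ∀ v ∈ W, v ∈ LinearMap.range K₃ → v = 0 := fun v hv hv3 =>
    Submodule.disjoint_def.1 hW'.disjoint v ⟨hv3, hv.2⟩ hv.1
  -- The modular law, applied with `range K₃ ⊓ range K₄ ≤ range K₄`.
  have hsup : (LinearMap.range K₃ ⊓ LinearMap.range K₄) ⊔ W = LinearMap.range K₄ := by
    rw [hW, ← sup_inf_assoc_of_le _ inf_le_right, hW'.sup_eq_top, top_inf_eq]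
  have h4 : LinearMap.range K₄ ≤ LinearMap.range K₃ ⊔ W :=
    hsup.symm.le.trans (sup_le_sup_right inf_le_left W)
  have hdim : fMin K₁ K₃ K₄ ⊤ ≤ Module.finrank F W := by
    refine Nat.sInf_le ⟨W, ?_, inf_le_right, rfl⟩
    rw [Submodule.map_top]
    exact h₁.trans (sup_le le_sup_left h4)
  have hcard : Nat.card (Fin (Fintype.card F ^ fMin K₁ K₃ K₄ ⊤)) ≤ Nat.card W := by
    rw [Module.natCard_eq_pow_finrank (K := F) (V := W), Nat.card_fin, Nat.card_eq_fintype_card]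
    exact Nat.pow_le_pow_right Fintype.card_pos hdim
  obtain ⟨w⟩ : Nonempty (Fin (Fintype.card F ^ fMin K₁ K₃ K₄ ⊤) ↪ W) := by
    have := Fintype.ofFinite W
    rw [Nat.card_eq_fintype_card, Nat.card_eq_fintype_card] at hcard
    exact Function.Embedding.nonempty_of_card_le hcard
  choose x hx using fun i => h₂ (w i).2.2
  refine ⟨x, fun i j hij => w.injective (Subtype.ext ?_), ?_⟩
  · rw [← hx i, ← hx j, hij]
  · rintro i j hij y ⟨a, ha⟩ ⟨b, hb⟩
    refine hij (w.injective (Subtype.ext (sub_eq_zero.1 (hdisj _ (W.sub_mem (w i).2 (w j).2) ?_))))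
    refine ⟨b - a, ?_⟩
    rw [← hx i, ← hx j, map_sub]
    linear_combination hb - ha
end
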